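/- arXiv:1108.3249 — 3 statements merged into one kernel-verified Lean document; each statement's English description precedes it below -/
import Mathlib

section
/- For every k×k permutation matrix Q there exists a constant d such that for all positive integers n, every n×n 0-1 matrix that avoids Q has at most d·n entries equal to 1. -/
/-- A permutation `p` of length `n` contains the permutation `q` of length `k` as a pattern. -/
def PermContains {n k : ℕ} (p : Equiv.Perm (Fin n)) (q : Equiv.Perm (Fin k)) : Prop :=
  ∃ f : Fin k → Fin n, StrictMono f ∧ ∀ a b : Fin k, p (f a) < p (f b) ↔ q a < q b

/-- A word `w` over `{1,…,n}` contains the permutation pattern `q` of length `k`. -/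
def WordContains {l n k : ℕ} (w : Fin l → Fin n) (q : Equiv.Perm (Fin k)) : Prop :=
  ∃ f : Fin k → Fin l, StrictMono f ∧ ∀ a b : Fin k, w (f a) < w (f b) ↔ q a < q b

/-- `w` is a permutation of the regular multiset `[n]_m`: each letter occurs exactly `m` times. -/
def IsRegularWord {l n : ℕ} (m : ℕ) (w : Fin l → Fin n) : Prop :=
  ∀ j : Fin n, (Finset.univ.filter fun i => w i = j).card = m

/-- Ordered-subgraph containment for simple bipartite graphs given by their edge sets. -/
def GraphContains {n n' k k' : ℕ} (P : Finset (Fin n × Fin n')) (Q : Finset (Fin k × Fin k')) :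
    Prop :=
  ∃ (f : Fin k → Fin n) (f' : Fin k' → Fin n'),
    StrictMono f ∧ StrictMono f' ∧ ∀ v v', (v, v') ∈ Q → (f v, f' v') ∈ P

/-- The bipartite graph associated to a permutation `q`: edges `(i, q i)`. -/
def permGraph {k : ℕ} (q : Equiv.Perm (Fin k)) : Finset (Fin k × Fin k) :=
  Finset.univ.image fun i => (i, q i)

/-- The bipartite graph associated to a word `w`: edges `(i, w i)`. -/
def wordGraph {l n : ℕ} (w : Fin l → Fin n) : Finset (Fin l × Fin n) :=
  Finset.univ.image fun i => (i, w i)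

/-- Pattern containment for 0-1 matrices. -/
def MatContains {n n' k k' : ℕ} (P : Fin n → Fin n' → Bool) (Q : Fin k → Fin k' → Bool) : Prop :=
  ∃ (r : Fin k → Fin n) (c : Fin k' → Fin n'),
    StrictMono r ∧ StrictMono c ∧ ∀ i j, Q i j = true → P (r i) (c j) = true

/-- The permutation matrix of a permutation `q`: 1-entry at `(i, q i)`. -/
def permMatrix {k : ℕ} (q : Equiv.Perm (Fin k)) : Fin k → Fin k → Bool :=
  fun i j => decide (q i = j)

/-- The number of 1-entries of a 0-1 matrix. -/
def oneEntries {n n' : ℕ} (P : Fin n → Fin n' → Bool) : ℕ :=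
  (Finset.univ.filter fun ij : Fin n × Fin n' => P ij.1 ij.2 = true).card

/-- The contraction of a bipartite graph on `([n·m],[n])` to one on `([n],[n])`:
`(i,j)` is an edge iff some vertex `t` in the `i`-th block of `m` consecutive vertices
is joined to `j`. -/
def contraction {n m : ℕ} (G : Finset (Fin (n * m) × Fin n)) : Finset (Fin n × Fin n) :=
  Finset.univ.filter fun ij : Fin n × Fin n =>
    ∃ t : Fin (n * m), (t, ij.2) ∈ G ∧ m * (ij.1 : ℕ) ≤ (t : ℕ) ∧ (t : ℕ) < m * ((ij.1 : ℕ) + 1)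

/-- The 0-1 adjacency matrix of a bipartite graph. -/
def adjMatrix {n n' : ℕ} (G : Finset (Fin n × Fin n')) : Fin n → Fin n' → Bool :=
  fun i j => decide ((i, j) ∈ G)

/-- A word contains the multiset pattern `212`. -/
def Contains212 {l n : ℕ} (w : Fin l → Fin n) : Prop :=
  ∃ i₁ i₂ i₃ : Fin l, i₁ < i₂ ∧ i₂ < i₃ ∧ w i₁ = w i₃ ∧ w i₂ < w i₁

/-! Following Marcus and Tardos, cut a `Q`-avoiding matrix into blocks of side at most `m` and
contract every block to a single entry; the contracted matrix still avoids `Q`. In each strip of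
columns only boundedly many blocks are wide, that is, have entries in many columns: otherwise, by
pigeonhole, many of them have entries in the same columns, and contracting their rows yields an
all-ones submatrix large enough to contain `Q`. By symmetry few blocks are tall, and every other
nonempty block has at most `K = k * k'` entries. Hence the maximal number `f n` of 1-entries
satisfies `f n ≤ K * f ⌈n / m⌉ + O(n)`. As `K` does not depend on `m`, taking `m` large
compared with `K` makes `f` linear. -/

open Finset Relator

/-- The set `S` of positions of the 1-entries of a 0-1 matrix with linearly ordered rows and columns
contains the pattern whose 1-entries are the pairs related by `Q`. The index types are arbitrary, so
that rows and columns can be contracted separately. -/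
def ContainsPattern {α β ι κ : Type*} [Preorder α] [Preorder β] [Preorder ι] [Preorder κ]
    (S : Finset (α × β)) (Q : ι → κ → Prop) : Prop :=
  ∃ (r : ι → α) (c : κ → β), StrictMono r ∧ StrictMono c ∧ ∀ i j, Q i j → (r i, c j) ∈ S

/-- A division of a finite order into nonempty intervals of at most `m` elements each, given as the
map that sends an element to the interval containing it. -/
structure IsBlockMap {α A : Type*} [Fintype α] [Preorder α] [Preorder A] [DecidableEq A]
    (m : ℕ) (ρ : α → A) : Prop where
  monotone : Monotone ρ
  surjective : Function.Surjective ρ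
  card_fiber_le : ∀ a, #{x | ρ x = a} ≤ m

section Pattern

variable {α β A B ι κ : Type*} [LinearOrder α] [LinearOrder β] [LinearOrder A] [LinearOrder B]
  [Preorder ι] [Preorder κ] {S : Finset (α × β)} {Q : ι → κ → Prop} {ρ : α → A} {γ : β → B}

theorem ContainsPattern.of_image_swap (h : ContainsPattern (S.image Prod.swap) (flip Q)) :
    ContainsPattern S Q := by
  obtain ⟨c, r, hc, hr, hS⟩ := h
  exact ⟨r, c, hr, hc, fun i j hij => by simpa using hS j i hij⟩

theorem ContainsPattern.of_contract_rows (hQ : RightUnique Q) (hρ : Monotone ρ)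
    (hsurj : Function.Surjective ρ) (h : ContainsPattern (S.image (Prod.map ρ id)) Q) :
    ContainsPattern S Q := by
  obtain ⟨a, c, ha, hc, hS⟩ := h
  have hrow (i : ι) : ∃ x, ρ x = a i ∧ ∀ j, Q i j → (x, c j) ∈ S := by
    by_cases hi : ∃ j, Q i j
    · obtain ⟨j, hij⟩ := hi
      obtain ⟨⟨x, y⟩, hxy, hmap⟩ := mem_image.mp (hS i j hij)
      obtain ⟨hx, rfl : y = c j⟩ := Prod.ext_iff.mp hmap
      exact ⟨x, hx, fun j' hij' => hQ hij hij' ▸ hxy⟩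
    · obtain ⟨x, hx⟩ := hsurj (a i)
      exact ⟨x, hx, fun j hij => absurd ⟨j, hij⟩ hi⟩
  choose r hra hrS using hrow
  refine ⟨r, c, fun i i' hlt => hρ.reflect_lt ?_, hc, hrS⟩
  simpa only [hra] using ha hlt

theorem ContainsPattern.of_contract_cols (hQ : LeftUnique Q) (hγ : Monotone γ)
    (hsurj : Function.Surjective γ) (h : ContainsPattern (S.image (Prod.map id γ)) Q) :
    ContainsPattern S Q := by
  refine .of_image_swap (.of_contract_rows hQ.flip hγ hsurj (.of_image_swap ?_))
  rw [image_image, image_image]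
  exact h

theorem ContainsPattern.of_contract (hQ : BiUnique Q) (hρ : Monotone ρ) (hγ : Monotone γ)
    (hρsurj : Function.Surjective ρ) (hγsurj : Function.Surjective γ)
    (h : ContainsPattern (S.image (Prod.map ρ γ)) Q) : ContainsPattern S Q := by
  refine .of_contract_cols hQ.1 hγ hγsurj (.of_contract_rows hQ.2 hρ hρsurj ?_)
  simpa only [image_image, Prod.map_comp_map, Function.id_comp, Function.comp_id] using h

end Pattern

section HeavyRows

variable {α β : Type*} [LinearOrder α] [LinearOrder β] {S : Finset (α × β)} {k k' : ℕ}
  {Q : Fin k → Fin k' → Prop}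

theorem ContainsPattern.of_product_subset {R : Finset α} {T : Finset β} (hR : k ≤ #R)
    (hT : k' ≤ #T) (h : R ×ˢ T ⊆ S) : ContainsPattern S Q :=
  ⟨R.orderEmbOfCardLe hR, T.orderEmbOfCardLe hT, OrderEmbedding.strictMono _,
    OrderEmbedding.strictMono _, fun i j _ => h (mem_product.mpr
      ⟨R.orderEmbOfCardLe_mem hR i, T.orderEmbOfCardLe_mem hT j⟩)⟩

theorem card_heavy_rows_le [Fintype α] (hS : ¬ ContainsPattern S Q) (T : Finset β) :
    #{a | k' ≤ #{y ∈ T | (a, y) ∈ S}} ≤ k * 2 ^ #T := by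
  rw [← card_powerset]
  refine card_le_mul_card_image_of_maps_to (f := fun a => {y ∈ T | (a, y) ∈ S})
    (fun a _ => mem_powerset.mpr (filter_subset _ _)) k fun U _ => ?_
  by_contra! hlt
  obtain ⟨a, ha⟩ := card_pos.mp (Nat.zero_lt_of_lt hlt)
  obtain ⟨hheavy, hU⟩ := mem_filter.mp ha
  rw [mem_filter_univ, hU] at hheavy
  refine hS (.of_product_subset hlt.le hheavy fun p hp => ?_)
  obtain ⟨hp₁, hp₂⟩ := mem_product.mp hp
  rw [← (mem_filter.mp hp₁).2] at hp₂
  exact (mem_filter.mp hp₂).2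

end HeavyRows

section Block

variable {α β A B : Type*} [DecidableEq A] [DecidableEq B]

/-- The part of `S` in the block `b`, where `ρ` and `γ` divide the rows and the columns. -/
def block (ρ : α → A) (γ : β → B) (S : Finset (α × β)) (b : A × B) : Finset (α × β) :=
  {p ∈ S | Prod.map ρ γ p = b}

/-- The blocks in which `S` meets at least `l` columns. -/
def wideBlocks [DecidableEq β] [Fintype A] [Fintype B] (ρ : α → A) (γ : β → B)
    (S : Finset (α × β)) (l : ℕ) : Finset (A × B) :=
  {b | l ≤ #((block ρ γ S b).image Prod.snd)}

/-- The blocks in which `S` meets at least `l` rows. -/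
def tallBlocks [DecidableEq α] [Fintype A] [Fintype B] (ρ : α → A) (γ : β → B)
    (S : Finset (α × β)) (l : ℕ) : Finset (A × B) :=
  {b | l ≤ #((block ρ γ S b).image Prod.fst)}

variable {ρ : α → A} {γ : β → B} {S : Finset (α × β)} {b : A × B}

theorem image_snd_block [DecidableEq β] [Fintype β] :
    (block ρ γ S b).image Prod.snd =
      ({y ∈ {y | γ y = b.2} | (b.1, y) ∈ S.image (Prod.map ρ id)} : Finset β) := by
  ext y
  simp only [block, mem_image, mem_filter, mem_univ, true_and, Prod.ext_iff, Prod.exists,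
    Prod.map_apply, id_eq]
  grind

theorem image_swap_block [DecidableEq α] [DecidableEq β] :
    (block ρ γ S b).image Prod.swap = block γ ρ (S.image Prod.swap) b.swap := by
  ext p
  simp only [block, mem_image, mem_filter, Prod.ext_iff, Prod.exists, Prod.map_fst, Prod.map_snd,
    Prod.fst_swap, Prod.snd_swap]
  grind

theorem image_fst_block [DecidableEq α] [DecidableEq β] :
    (block ρ γ S b).image Prod.fst =
      (block γ ρ (S.image Prod.swap) b.swap).image Prod.snd := by
  rw [← image_swap_block, image_image]
  rfl

theorem card_block_le_mul [DecidableEq α] [DecidableEq β] :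
    #(block ρ γ S b) ≤ #((block ρ γ S b).image Prod.fst) * #((block ρ γ S b).image Prod.snd) :=
  (card_le_card subset_product).trans_eq (card_product _ _)

end Block

section Recurrence

variable {α β A B : Type*} [LinearOrder α] [LinearOrder β] [LinearOrder A] [LinearOrder B]
  [Fintype α] [Fintype β] {ρ : α → A} {γ : β → B} {S : Finset (α × β)} {b : A × B} {k k' m : ℕ}
  {Q : Fin k → Fin k' → Prop}

theorem card_block_le_sq (hρ : IsBlockMap m ρ) (hγ : IsBlockMap m γ) :
    #(block ρ γ S b) ≤ m * m := by
  refine card_block_le_mul.trans (Nat.mul_le_mul ?_ ?_)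
  · rw [image_fst_block, image_snd_block]
    exact (card_le_card (filter_subset _ _)).trans (hρ.card_fiber_le _)
  · rw [image_snd_block]
    exact (card_le_card (filter_subset _ _)).trans (hγ.card_fiber_le _)

variable [Fintype A] [Fintype B]

theorem card_wideBlocks_le (hQ : RightUnique Q) (hρ : IsBlockMap m ρ) (hγ : IsBlockMap m γ)
    (hS : ¬ ContainsPattern S Q) :
    #(wideBlocks ρ γ S k') ≤ k * 2 ^ m * Fintype.card B := by
  refine card_le_mul_card_image_of_maps_to (fun b _ => mem_univ b.2) _ fun b _ => ?_
  have hcontract : ¬ ContainsPattern (S.image (Prod.map ρ id)) Q :=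
    mt (.of_contract_rows hQ hρ.monotone hρ.surjective) hS
  calc #{c ∈ wideBlocks ρ γ S k' | c.2 = b}
      ≤ #{a | k' ≤ #{y ∈ {y | γ y = b} | (a, y) ∈ S.image (Prod.map ρ id)}} := by
        refine card_le_card_of_injOn Prod.fst (fun c hc => ?_) fun c hc c' hc' h => ?_
        · simp only [wideBlocks, image_snd_block, coe_filter, mem_filter_univ,
            Set.mem_ofPred_eq] at hc
          simpa only [coe_filter, mem_univ, true_and, Set.mem_ofPred_eq, hc.2] using hc.1
        · exact Prod.ext h ((mem_filter.mp hc).2.trans (mem_filter.mp hc').2.symm)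
    _ ≤ k * 2 ^ #{y | γ y = b} := card_heavy_rows_le hcontract _
    _ ≤ k * 2 ^ m := by gcongr; exacts [one_le_two, hγ.card_fiber_le b]

theorem card_tallBlocks_le (hQ : LeftUnique Q) (hρ : IsBlockMap m ρ) (hγ : IsBlockMap m γ)
    (hS : ¬ ContainsPattern S Q) :
    #(tallBlocks ρ γ S k) ≤ k' * 2 ^ m * Fintype.card A := by
  refine le_trans (card_le_card_of_injOn Prod.swap (fun b hb => ?_) Prod.swap_injective.injOn)
    (card_wideBlocks_le hQ.flip hγ hρ (mt .of_image_swap hS))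
  simpa only [tallBlocks, wideBlocks, coe_filter, mem_univ, true_and, Set.mem_ofPred_eq,
    image_fst_block] using hb

theorem card_le_card_contract_add (hρ : IsBlockMap m ρ) (hγ : IsBlockMap m γ) (l l' : ℕ) :
    #S ≤ l * l' * #(S.image (Prod.map ρ γ)) +
      m * m * #(wideBlocks ρ γ S l' ∪ tallBlocks ρ γ S l) := by
  set E := wideBlocks ρ γ S l' ∪ tallBlocks ρ γ S l with hE
  have hblock (b : A × B) : #(block ρ γ S b) ≤ l * l' + if b ∈ E then m * m else 0 := by
    split_ifs with hb
    · exact le_add_left (card_block_le_sq hρ hγ)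
    · simp only [hE, wideBlocks, tallBlocks, mem_union, mem_filter_univ, not_or, not_le] at hb
      exact card_block_le_mul.trans (Nat.mul_le_mul hb.2.le hb.1.le)
  calc #S = ∑ b ∈ S.image (Prod.map ρ γ), #(block ρ γ S b) :=
        card_eq_sum_card_fiberwise fun p hp => mem_image_of_mem _ hp
    _ ≤ ∑ b ∈ S.image (Prod.map ρ γ), (l * l' + if b ∈ E then m * m else 0) :=
        sum_le_sum fun b _ => hblock b
    _ = l * l' * #(S.image (Prod.map ρ γ)) + m * m * #(S.image (Prod.map ρ γ) ∩ E) := by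
        rw [sum_add_distrib, sum_ite_mem, sum_const, sum_const, smul_eq_mul, smul_eq_mul,
          mul_comm, mul_comm (m * m)]
    _ ≤ l * l' * #(S.image (Prod.map ρ γ)) + m * m * #E := by
        gcongr
        exact inter_subset_right

theorem card_le_of_not_containsPattern (hQ : BiUnique Q) (hρ : IsBlockMap m ρ)
    (hγ : IsBlockMap m γ) (hS : ¬ ContainsPattern S Q) {t : ℕ} (hA : Fintype.card A ≤ t)
    (hB : Fintype.card B ≤ t) :
    #S ≤ k * k' * #(S.image (Prod.map ρ γ)) + m * m * ((k + k') * 2 ^ m) * t := by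
  have hexceptional : #(wideBlocks ρ γ S k' ∪ tallBlocks ρ γ S k) ≤ (k + k') * 2 ^ m * t :=
    calc #(wideBlocks ρ γ S k' ∪ tallBlocks ρ γ S k)
        ≤ k * 2 ^ m * Fintype.card B + k' * 2 ^ m * Fintype.card A :=
          (card_union_le _ _).trans (add_le_add (card_wideBlocks_le hQ.2 hρ hγ hS)
            (card_tallBlocks_le hQ.1 hρ hγ hS))
      _ ≤ k * 2 ^ m * t + k' * 2 ^ m * t := by gcongr
      _ = (k + k') * 2 ^ m * t := by ring
  calc #S ≤ _ := card_le_card_contract_add hρ hγ k k'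
    _ ≤ k * k' * #(S.image (Prod.map ρ γ)) + m * m * ((k + k') * 2 ^ m * t) := by gcongr
    _ = _ := by ring

end Recurrence

theorem exists_isBlockMap_ceilDiv {m : ℕ} (hm : 0 < m) (n : ℕ) :
    ∃ ρ : Fin n → Fin (n ⌈/⌉ m), IsBlockMap m ρ := by
  have hlt (i : Fin n) : (i : ℕ) / m < n ⌈/⌉ m :=
    (gc_mul_ceilDiv hm).lt_iff_lt.mpr ((Nat.mul_div_le i m).trans_lt i.isLt)
  refine ⟨fun i => ⟨i / m, hlt i⟩, fun i j hij => Nat.div_le_div_right hij, fun a => ?_,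
    fun a => ?_⟩
  · have ha : m * a < n := (gc_mul_ceilDiv hm).lt_iff_lt.mp a.isLt
    exact ⟨⟨m * a, ha⟩, Fin.ext (Nat.mul_div_cancel_left _ hm)⟩
  · calc #{x : Fin n | (⟨x / m, hlt x⟩ : Fin (n ⌈/⌉ m)) = a}
        ≤ #(Ico (a * m : ℕ) (a * m + m)) := by
          refine card_le_card_of_injOn Fin.val (fun x hx => ?_) Fin.val_injective.injOn
          have hx : (x : ℕ) / m = a := by simpa [Fin.ext_iff] using hx
          rw [coe_Ico, Set.mem_Ico, ← hx]
          exact ⟨Nat.div_mul_le_self _ _, Nat.lt_div_mul_add hm⟩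
      _ = m := by rw [Nat.card_Ico, Nat.add_sub_cancel_left]

theorem two_mul_mul_ceilDiv_le {K s : ℕ} (hs : 4 * K ≤ s) :
    2 * K * (s ⌈/⌉ (4 * K)) ≤ s := by
  have h : 4 * K * (s ⌈/⌉ (4 * K)) ≤ s + 4 * K - 1 := by
    rw [Nat.ceilDiv_eq_add_pred_div]
    exact Nat.mul_div_le _ _
  grind

theorem linear_recurrence_step_le {K C d s t : ℕ} (hK : 2 * K * t ≤ s) (hts : t ≤ s)
    (hC : 2 * C ≤ d) : K * (d * t) + C * t ≤ d * s := by
  refine Nat.le_of_mul_le_mul_left ?_ two_pos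
  calc 2 * (K * (d * t) + C * t) = d * (2 * K * t) + 2 * C * t := by ring
    _ ≤ d * s + d * s := by gcongr
    _ = 2 * (d * s) := by ring

theorem exists_card_le_mul_of_not_containsPattern {k k' : ℕ} {Q : Fin k → Fin k' → Prop}
    (hQ : BiUnique Q) :
    ∃ d : ℕ, ∀ s n n' : ℕ, n ≤ s → n' ≤ s → ∀ S : Finset (Fin n × Fin n'),
      ¬ ContainsPattern S Q → #S ≤ d * s := by
  -- The `+ 1` keeps the block size positive when `Q` has no rows or no columns.
  set K := k * k' + 1
  set m := 4 * K
  set C := m * m * ((k + k') * 2 ^ m)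
  have hK : 0 < K := Nat.succ_pos _
  have hm : 0 < m := by positivity
  refine ⟨2 * C + m, fun s => ?_⟩
  induction s using Nat.strong_induction_on with | _ s ih
  intro n n' hn hn' S hS
  obtain hs | hs := lt_or_ge s m
  · calc #S ≤ n * n' := by simpa using card_le_univ S
      _ ≤ m * s := Nat.mul_le_mul (hn.trans hs.le) hn'
      _ ≤ (2 * C + m) * s := by gcongr; exact Nat.le_add_left _ _
  · obtain ⟨ρ, hρ⟩ := exists_isBlockMap_ceilDiv hm n
    obtain ⟨γ, hγ⟩ := exists_isBlockMap_ceilDiv hm n'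
    set t := s ⌈/⌉ m
    have htK : 2 * K * t ≤ s := two_mul_mul_ceilDiv_le hs
    have hts : t < s := by nlinarith [Nat.mul_le_mul_right t hK]
    have hnt : n ⌈/⌉ m ≤ t := (gc_mul_ceilDiv hm).monotone_l hn
    have hnt' : n' ⌈/⌉ m ≤ t := (gc_mul_ceilDiv hm).monotone_l hn'
    have hcontract : #(S.image (Prod.map ρ γ)) ≤ (2 * C + m) * t :=
      ih t hts _ _ hnt hnt' _ (mt (.of_contract hQ hρ.monotone hγ.monotone hρ.surjective
        hγ.surjective) hS)
    have hstep : #S ≤ k * k' * #(S.image (Prod.map ρ γ)) + C * t :=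
      card_le_of_not_containsPattern hQ hρ hγ hS (by simpa using hnt) (by simpa using hnt')
    calc #S ≤ K * ((2 * C + m) * t) + C * t :=
          hstep.trans (by gcongr; exact Nat.le_succ _)
      _ ≤ (2 * C + m) * s := linear_recurrence_step_le htK hts.le (Nat.le_add_right _ _)

theorem furedi_hajnal_general {k k' : ℕ} (Q : Fin k → Fin k' → Bool)
    (hQ : BiUnique fun i j => Q i j = true) :
    ∃ d : ℕ, ∀ (n n' : ℕ) (P : Fin n → Fin n' → Bool),
      ¬ MatContains P Q → oneEntries P ≤ d * max n n' := by
  obtain ⟨d, hd⟩ := exists_card_le_mul_of_not_containsPattern hQ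
  refine ⟨d, fun n n' P hP => hd _ n n' (le_max_left _ _) (le_max_right _ _) _ ?_⟩
  simpa only [MatContains, ContainsPattern, mem_filter_univ] using hP

/-- The Füredi–Hajnal conjecture. -/
theorem furedi_hajnal (k : ℕ) (Q : Fin k → Fin k → Bool)
    (hrow : ∀ i, ∃! j, Q i j = true) (hcol : ∀ j, ∃! i, Q i j = true) :
    ∃ d : ℕ, ∀ n : ℕ, 0 < n → ∀ P : Fin n → Fin n → Bool,
      ¬ MatContains P Q → oneEntries P ≤ d * n := by
  obtain ⟨d, hd⟩ := furedi_hajnal_general Q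
    ⟨fun _ _ j h h' => (hcol j).unique h h', fun i _ _ h h' => (hrow i).unique h h'⟩
  exact ⟨d, fun n _ P hP => by simpa only [max_self] using hd n n P hP⟩
end

section
/- Let q be a permutation of length k with permutation matrix M_q, and suppose d is a constant such that for every positive integer n, every n×n 0-1 matrix avoiding M_q has at most d·n entries equal to 1. Then for every positive integer n, the number S_n(q) of permutations of length n avoiding the pattern q satisfies S_n(q) ≤ 15^(2·d·n). -/
/-!
Contract an even-sized matrix by replacing each `2 × 2` block with the disjunction of its entries.
If the contraction contains a permutation matrix, so does the original matrix: the chosen 1-entries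
lie in distinct block rows and distinct block columns, so picking a 1-entry inside each block
preserves all order relations. Conversely a matrix is recovered from its contraction by choosing
one of `2 ^ 4 - 1 = 15` nonzero blocks for each 1-entry of the contraction. Hence doubling the size
from `N` to `2 * N` multiplies the number of avoiders by at most `15 ^ (d * N)`, and these factors
telescope to `15 ^ (d * 2 ^ m)` in size `2 ^ m`. Every `n` has a power of two between `n` and
`2 * n`, to which matrices of size `n` are padded with zeros; permutations that avoid `q` have
permutation matrices that avoid `permMatrix q`.
-/

open Finset

open Classical in
/-- The `n × n` 0-1 matrices that avoid the 0-1 matrix `Q`, as a finite set to be counted. -/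
noncomputable def avoiders {k k' : ℕ} (Q : Fin k → Fin k' → Bool) (n : ℕ) :
    Finset (Fin n → Fin n → Bool) :=
  {P | ¬ MatContains P Q}

lemma mem_avoiders {k k' n : ℕ} {Q : Fin k → Fin k' → Bool} {P : Fin n → Fin n → Bool} :
    P ∈ avoiders Q n ↔ ¬ MatContains P Q := by
  simp [avoiders]

section PermMatrix

variable {k n : ℕ}

lemma permMatrix_eq_true_iff {q : Equiv.Perm (Fin k)} {i j : Fin k} :
    permMatrix q i j = true ↔ q i = j := by
  simp [permMatrix]

lemma permMatrix_injective :
    Function.Injective (permMatrix : Equiv.Perm (Fin k) → Fin k → Fin k → Bool) := by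
  intro p p' h
  ext1 i
  have hi : permMatrix p' i (p i) = true := h ▸ permMatrix_eq_true_iff.2 rfl
  exact (permMatrix_eq_true_iff.1 hi).symm

lemma matContains_permMatrix_iff {p : Equiv.Perm (Fin n)} {q : Equiv.Perm (Fin k)} :
    MatContains (permMatrix p) (permMatrix q) ↔ PermContains p q := by
  constructor
  · rintro ⟨r, c, hr, hc, hrc⟩
    have hp (i : Fin k) : p (r i) = c (q i) :=
      permMatrix_eq_true_iff.1 (hrc i (q i) (permMatrix_eq_true_iff.2 rfl))
    exact ⟨r, hr, fun i j => by rw [hp, hp, hc.lt_iff_lt]⟩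
  · rintro ⟨f, hf, hpq⟩
    refine ⟨f, fun j => p (f (q.symm j)), hf, fun i j hij => (hpq _ _).2 (by simpa using hij), ?_⟩
    intro i j hij
    obtain rfl := permMatrix_eq_true_iff.1 hij
    simp [permMatrix]

lemma card_perm_not_permContains_le (q : Equiv.Perm (Fin k)) (n : ℕ) :
    Nat.card {p : Equiv.Perm (Fin n) // ¬ PermContains p q} ≤ #(avoiders (permMatrix q) n) := by
  rw [← Nat.card_eq_finsetCard]
  refine Nat.card_le_card_of_injective (fun p => ⟨permMatrix p.1, ?_⟩) fun p p' h => ?_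
  · exact mem_avoiders.2 (mt matContains_permMatrix_iff.1 p.2)
  · exact Subtype.ext (permMatrix_injective (congrArg Subtype.val h))

end PermMatrix

section BlockContraction

variable {m n a b : ℕ}

lemma finProdFinEquiv_lt_of_fst_lt {i i' : Fin m} (h : i < i') (x x' : Fin a) :
    finProdFinEquiv (i, x) < finProdFinEquiv (i', x') := by
  have hi : a * (i + 1) ≤ a * i' := Nat.mul_le_mul_left a h
  rw [Fin.lt_def, finProdFinEquiv_apply_val, finProdFinEquiv_apply_val]
  dsimp only
  linarith [x.isLt]

/-- The block at position `ij` when `P` is cut into blocks of `a` consecutive rows and `b`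
consecutive columns; `finProdFinEquiv (i, x)` is the index `a * i + x`. -/
def blockAt (P : Fin (m * a) → Fin (n * b) → Bool) (ij : Fin m × Fin n) : Fin a × Fin b → Bool :=
  fun xy => P (finProdFinEquiv (ij.1, xy.1)) (finProdFinEquiv (ij.2, xy.2))

/-- The contraction of a 0-1 matrix cut into `a × b` blocks: an entry is 1 exactly when the
corresponding block is not the zero block, written `⊥`. -/
def blockContraction (P : Fin (m * a) → Fin (n * b) → Bool) : Fin m → Fin n → Bool :=
  fun i j => decide (blockAt P (i, j) ≠ ⊥)

lemma blockContraction_eq_true_iff {P : Fin (m * a) → Fin (n * b) → Bool} {i : Fin m} {j : Fin n} :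
    blockContraction P i j = true ↔ blockAt P (i, j) ≠ ⊥ :=
  decide_eq_true_iff

lemma blockAt_injective :
    Function.Injective
      (blockAt : (Fin (m * a) → Fin (n * b) → Bool) → Fin m × Fin n → Fin a × Fin b → Bool) := by
  intro P P' h
  ext s t : 2
  obtain ⟨⟨i, x⟩, rfl⟩ := finProdFinEquiv.surjective s
  obtain ⟨⟨j, y⟩, rfl⟩ := finProdFinEquiv.surjective t
  exact congrFun (congrFun h (i, j)) (x, y)

lemma MatContains.of_blockContraction {k : ℕ} {q : Equiv.Perm (Fin k)}
    {P : Fin (m * a) → Fin (n * b) → Bool}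
    (h : MatContains (blockContraction P) (permMatrix q)) : MatContains P (permMatrix q) := by
  obtain ⟨r, c, hr, hc, hrc⟩ := h
  have exists_one (i : Fin k) : ∃ xy, blockAt P (r i, c (q i)) xy = true := by
    have hne := blockContraction_eq_true_iff.1 (hrc i (q i) (permMatrix_eq_true_iff.2 rfl))
    simpa using Function.ne_iff.1 hne
  choose xy hxy using exists_one
  refine ⟨fun i => finProdFinEquiv (r i, (xy i).1),
    fun j => finProdFinEquiv (c j, (xy (q.symm j)).2),
    fun i i' hi => finProdFinEquiv_lt_of_fst_lt (hr hi) _ _,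
    fun j j' hj => finProdFinEquiv_lt_of_fst_lt (hc hj) _ _, fun i j hij => ?_⟩
  obtain rfl := permMatrix_eq_true_iff.1 hij
  simpa [blockAt] using hxy i

/-- The block families that are nonzero exactly at the 1-entries of `C`: the possible `blockAt P`
for matrices `P` with contraction `C`. -/
def blockFamilies (a b : ℕ) (C : Fin m → Fin n → Bool) :
    Finset (Fin m × Fin n → Fin a × Fin b → Bool) :=
  Fintype.piFinset fun ij => if C ij.1 ij.2 then {⊥}ᶜ else {⊥}

lemma blockAt_mem_blockFamilies (P : Fin (m * a) → Fin (n * b) → Bool) :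
    blockAt P ∈ blockFamilies a b (blockContraction P) := by
  refine Fintype.mem_piFinset.2 fun ij => ?_
  by_cases h : blockAt P ij = ⊥ <;> simp [blockContraction, h]

lemma card_blockFamilies (a b : ℕ) (C : Fin m → Fin n → Bool) :
    #(blockFamilies a b C) = (2 ^ (a * b) - 1) ^ oneEntries C := by
  have card_choices (ij : Fin m × Fin n) :
      #(if C ij.1 ij.2 then {⊥}ᶜ else {⊥} : Finset (Fin a × Fin b → Bool)) =
        if C ij.1 ij.2 then 2 ^ (a * b) - 1 else 1 := by
    split_ifs <;> simp [card_compl]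
  simp only [blockFamilies, Fintype.card_piFinset, card_choices, prod_ite, prod_const, oneEntries,
    one_pow, mul_one]

lemma card_filter_blockContraction_eq_le (s : Finset (Fin (m * a) → Fin (n * b) → Bool))
    (C : Fin m → Fin n → Bool) :
    #{P ∈ s | blockContraction P = C} ≤ (2 ^ (a * b) - 1) ^ oneEntries C := by
  rw [← card_blockFamilies]
  refine card_le_card_of_injOn blockAt (fun P hP => ?_) blockAt_injective.injOn
  obtain rfl : blockContraction P = C := (mem_filter.1 hP).2
  exact blockAt_mem_blockFamilies P

lemma card_avoiders_mul_le {k e : ℕ} {q : Equiv.Perm (Fin k)} (hb : 0 < b)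
    (he : ∀ C ∈ avoiders (permMatrix q) n, oneEntries C ≤ e) :
    #(avoiders (permMatrix q) (n * b)) ≤
      (2 ^ (b * b) - 1) ^ e * #(avoiders (permMatrix q) n) := by
  refine card_le_mul_card_image_of_maps_to (f := blockContraction) (fun P hP => ?_) _
    fun C hC => ?_
  · exact mem_avoiders.2 (mt MatContains.of_blockContraction (mem_avoiders.1 hP))
  · have one_le : 1 ≤ 2 ^ (b * b) - 1 := Nat.le_sub_one_of_lt (Nat.one_lt_two_pow (by positivity))
    exact (card_filter_blockContraction_eq_le _ C).trans (Nat.pow_le_pow_right one_le (he C hC))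

end BlockContraction

section ZeroPad

variable {m n M N : ℕ}

/-- The `m × n` matrix `P` placed in the upper left corner of an `M × N` zero matrix. -/
def zeroPad (M N : ℕ) (P : Fin m → Fin n → Bool) : Fin M → Fin N → Bool :=
  fun i j => decide (∃ i' j', P i' j' = true ∧ (i' : ℕ) = i ∧ (j' : ℕ) = j)

lemma zeroPad_castLE (hM : m ≤ M) (hN : n ≤ N) (P : Fin m → Fin n → Bool) (i : Fin m) (j : Fin n) :
    zeroPad M N P (i.castLE hM) (j.castLE hN) = P i j := by
  simp [zeroPad, Fin.val_inj]

lemma zeroPad_injective (hM : m ≤ M) (hN : n ≤ N) :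
    Function.Injective (zeroPad M N : (Fin m → Fin n → Bool) → Fin M → Fin N → Bool) := by
  intro P P' h
  ext i j : 2
  rw [← zeroPad_castLE hM hN P, h, zeroPad_castLE]

lemma MatContains.of_zeroPad {k : ℕ} {q : Equiv.Perm (Fin k)} {P : Fin m → Fin n → Bool}
    (h : MatContains (zeroPad M N P) (permMatrix q)) : MatContains P (permMatrix q) := by
  obtain ⟨r, c, hr, hc, hrc⟩ := h
  have exists_one (i : Fin k) :
      ∃ i' j', P i' j' = true ∧ (i' : ℕ) = r i ∧ (j' : ℕ) = c (q i) := by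
    simpa [zeroPad] using hrc i (q i) (permMatrix_eq_true_iff.2 rfl)
  choose r' c' hP hr' hc' using exists_one
  refine ⟨r', fun j => c' (q.symm j), fun i i' hi => ?_, fun j j' hj => ?_, fun i j hij => ?_⟩
  · simpa only [Fin.lt_def, hr'] using hr hi
  · simpa only [Fin.lt_def, hc', Equiv.apply_symm_apply] using hc hj
  · obtain rfl := permMatrix_eq_true_iff.1 hij
    simpa using hP i

lemma card_avoiders_permMatrix_mono {k : ℕ} (q : Equiv.Perm (Fin k)) :
    Monotone fun n => #(avoiders (permMatrix q) n) := fun _ N h =>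
  card_le_card_of_injOn (zeroPad N N)
    (fun _ hP => mem_avoiders.2 (mt MatContains.of_zeroPad (mem_avoiders.1 hP)))
    (zeroPad_injective h h).injOn

end ZeroPad

section Counting

variable {k : ℕ} {d : ℝ}

lemma pow_natFloor_le_rpow {x y : ℝ} (hx : 1 ≤ x) (hy : 0 ≤ y) : x ^ ⌊y⌋₊ ≤ x ^ y := by
  rw [← Real.rpow_natCast]
  exact Real.rpow_le_rpow_of_exponent_le hx (Nat.floor_le hy)

lemma oneEntries_injective_of_size_one :
    Function.Injective (oneEntries : (Fin 1 → Fin 1 → Bool) → ℕ) := by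
  decide

lemma card_avoiders_one_le {k' e : ℕ} {Q : Fin k → Fin k' → Bool}
    (he : ∀ P ∈ avoiders Q 1, oneEntries P ≤ e) : #(avoiders Q 1) ≤ e + 1 := by
  rw [← card_range (e + 1)]
  exact card_le_card_of_injOn oneEntries
    (fun P hP => mem_coe.2 (mem_range_succ_iff.2 (he P hP))) oneEntries_injective_of_size_one.injOn

lemma card_avoiders_two_pow_le {q : Equiv.Perm (Fin k)} (hd₀ : 0 ≤ d)
    (hd : ∀ m : ℕ, ∀ P ∈ avoiders (permMatrix q) (2 ^ m), (oneEntries P : ℝ) ≤ d * 2 ^ m) (m : ℕ) :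
    (#(avoiders (permMatrix q) (2 ^ m)) : ℝ) ≤ 15 ^ (d * 2 ^ m) := by
  have one_le : (1 : ℝ) ≤ 15 := by norm_num
  induction m with
  | zero =>
    have card_le : #(avoiders (permMatrix q) 1) ≤ 15 ^ ⌊d⌋₊ :=
      (card_avoiders_one_le fun P hP => Nat.le_floor (by simpa using hd 0 P hP)).trans
        (Nat.lt_pow_self (by norm_num))
    calc (#(avoiders (permMatrix q) 1) : ℝ) ≤ 15 ^ ⌊d⌋₊ := mod_cast card_le
      _ ≤ 15 ^ d := pow_natFloor_le_rpow one_le hd₀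
      _ = 15 ^ (d * 2 ^ 0) := by simp
  | succ m ih =>
    have card_le : #(avoiders (permMatrix q) (2 ^ (m + 1))) ≤
        15 ^ ⌊d * 2 ^ m⌋₊ * #(avoiders (permMatrix q) (2 ^ m)) :=
      card_avoiders_mul_le two_pos fun P hP => Nat.le_floor (hd m P hP)
    calc (#(avoiders (permMatrix q) (2 ^ (m + 1))) : ℝ)
        ≤ 15 ^ ⌊d * 2 ^ m⌋₊ * #(avoiders (permMatrix q) (2 ^ m)) := mod_cast card_le
      _ ≤ 15 ^ (d * 2 ^ m) * 15 ^ (d * 2 ^ m) := by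
        gcongr
        exact pow_natFloor_le_rpow one_le (by positivity)
      _ = 15 ^ (d * 2 ^ (m + 1)) := by
        rw [← Real.rpow_add (by norm_num)]
        ring_nf

lemma card_avoiders_permMatrix_le {q : Equiv.Perm (Fin k)}
    (hd : ∀ n : ℕ, 0 < n → ∀ P ∈ avoiders (permMatrix q) n, (oneEntries P : ℝ) ≤ d * n)
    {n : ℕ} (hn : 0 < n) :
    (#(avoiders (permMatrix q) n) : ℝ) ≤ 15 ^ (2 * d * n) := by
  obtain h | ⟨P, hP⟩ := (avoiders (permMatrix q) n).eq_empty_or_nonempty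
  · rw [h, card_empty, Nat.cast_zero]
    positivity
  have hd₀ : 0 ≤ d :=
    nonneg_of_mul_nonneg_left ((Nat.cast_nonneg _).trans (hd n hn P hP)) (mod_cast hn)
  set m := Nat.log 2 n + 1
  have le_two_pow : n ≤ 2 ^ m := (Nat.lt_pow_succ_log_self one_lt_two n).le
  have two_pow_le : 2 ^ m ≤ 2 * n := by
    rw [pow_succ']
    exact Nat.mul_le_mul_left 2 (Nat.pow_log_le_self 2 hn.ne')
  calc (#(avoiders (permMatrix q) n) : ℝ)
      ≤ #(avoiders (permMatrix q) (2 ^ m)) := mod_cast card_avoiders_permMatrix_mono q le_two_pow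
    _ ≤ 15 ^ (d * 2 ^ m) :=
      card_avoiders_two_pow_le hd₀ (fun l P hP => mod_cast hd (2 ^ l) (by positivity) P hP) m
    _ ≤ 15 ^ (d * (2 * n)) := by
      gcongr
      · norm_num
      · exact_mod_cast two_pow_le
    _ = 15 ^ (2 * d * n) := by ring_nf

end Counting

theorem klazar_reduction_general (k : ℕ) (q : Equiv.Perm (Fin k)) (d : ℝ)
    (hd : ∀ n : ℕ, 0 < n → ∀ P : Fin n → Fin n → Bool,
      ¬ MatContains P (permMatrix q) → (oneEntries P : ℝ) ≤ d * n)
    (n : ℕ) (hn : 0 < n) :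
    (Nat.card {p : Equiv.Perm (Fin n) // ¬ PermContains p q} : ℝ) ≤ 15 ^ (2 * d * n) :=
  calc (Nat.card {p : Equiv.Perm (Fin n) // ¬ PermContains p q} : ℝ)
      ≤ #(avoiders (permMatrix q) n) := mod_cast card_perm_not_permContains_le q n
    _ ≤ 15 ^ (2 * d * n) :=
      card_avoiders_permMatrix_le (fun n hn P hP => hd n hn P (mem_avoiders.1 hP)) hn

/-- Klazar: Füredi–Hajnal implies Stanley–Wilf with constant `15 ^ (2 d)`. -/
theorem klazar_reduction (k : ℕ) (q : Equiv.Perm (Fin k)) (d : ℕ)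
    (hd : ∀ n : ℕ, 0 < n → ∀ P : Fin n → Fin n → Bool,
      ¬ MatContains P (permMatrix q) → oneEntries P ≤ d * n)
    (n : ℕ) (hn : 0 < n) :
    Nat.card {p : Equiv.Perm (Fin n) // ¬ PermContains p q} ≤ 15 ^ (2 * d * n) := by
  have h := klazar_reduction_general k q d (fun n hn P hP => mod_cast hd n hn P hP) n hn
  exact_mod_cast h
end

section
/- Let q be a permutation of length k with permutation matrix M_q, and suppose d is a constant such that for every positive integer n, every n×n 0-1 matrix avoiding M_q has at most d·n entries equal to 1. Then for all positive integers n and m, the number S_{n,m}(q) of permutations of the regular multiset [n]_m avoiding the pattern q satisfies S_{n,m}(q) ≤ ((2 · 15^2)^d)^(n·m). -/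
/-!
View a word or a 0-1 matrix as a bipartite graph, and contract it by sending each side
monotonically onto blocks of consecutive vertices. An occurrence of a permutation pattern in the
contraction lifts to the original graph, since each edge of a permutation graph can be lifted
independently: no two of them share a vertex. A graph with contraction `t` is determined by a
nonempty subset of the at most `r * s` potential edges over each edge of `t`. If avoiding graphs on
`n + n` vertices have at most `d * n` edges, contracting to `n + n` vertices therefore costs a
factor of at most `(2 ^ (r * s) - 1) ^ (d * n)`. Contracting repeatedly with `r = s = 2` gives
Klazar's bound `15 ^ (2 * d * n)` on the number of avoiding `n × n` graphs; contracting words once,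
with `r = m` and `s = 1`, reduces them to this case.
-/

open Finset

section ImageFibers

variable {α β : Type*} [Fintype α] [DecidableEq β] {π : α → β} {b e : ℕ}

theorem card_filter_image_eq_le (hπ : ∀ y, #{x | π x = y} ≤ b) (t : Finset β) :
    #{s : Finset α | s.image π = t} ≤ (2 ^ b - 1) ^ #t := by
  classical
  let blocks : Finset (∀ y ∈ t, Finset α) :=
    t.pi fun y ↦ ({x | π x = y} : Finset α).powerset.erase ∅
  have card_blocks : #blocks ≤ (2 ^ b - 1) ^ #t := by
    rw [card_pi]
    refine prod_le_pow_card _ _ _ fun y _ ↦ ?_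
    rw [card_erase_of_mem (empty_mem_powerset _), card_powerset]
    gcongr
    exacts [one_le_two, hπ y]
  refine (card_le_card_of_injOn (fun s y _ ↦ s.filter (π · = y)) ?_ ?_).trans card_blocks
  · intro s hs
    obtain rfl : s.image π = t := by simpa using hs
    refine mem_pi.2 fun y hy ↦ mem_erase.2
      ⟨?_, mem_powerset.2 (filter_subset_filter _ s.subset_univ)⟩
    obtain ⟨x, hx, hxy⟩ := mem_image.1 hy
    exact ne_empty_of_mem (mem_filter.2 ⟨hx, hxy⟩)
  · intro s hs s' hs' hss'
    have hst : s.image π = t := by simpa using hs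
    have hst' : s'.image π = t := by simpa using hs'
    have block_eq (y) (hy : y ∈ t) : {x ∈ s | π x = y} = {x ∈ s' | π x = y} :=
      congrFun₂ hss' y hy
    ext x
    by_cases hx : π x ∈ t
    · simpa using Finset.ext_iff.1 (block_eq (π x) hx) x
    · exact iff_of_false (fun h ↦ hx (hst ▸ mem_image_of_mem π h))
        fun h ↦ hx (hst' ▸ mem_image_of_mem π h)

theorem card_le_pow_mul_card_image_image (hb : 0 < b) (hπ : ∀ y, #{x | π x = y} ≤ b)
    (S : Finset (Finset α)) (hS : ∀ s ∈ S, #(s.image π) ≤ e) :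
    #S ≤ (2 ^ b - 1) ^ e * #(S.image (image π)) := by
  classical
  refine card_le_mul_card_image S _ fun t ht ↦ ?_
  obtain ⟨s, hs, rfl⟩ := mem_image.1 ht
  calc #{s' ∈ S | s'.image π = s.image π}
      ≤ #{s' | s'.image π = s.image π} := card_le_card (filter_subset_filter _ S.subset_univ)
    _ ≤ (2 ^ b - 1) ^ #(s.image π) := card_filter_image_eq_le hπ _
    _ ≤ (2 ^ b - 1) ^ e :=
      Nat.pow_le_pow_right (Nat.sub_pos_of_lt (Nat.one_lt_two_pow hb.ne')) (hS s hs)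

end ImageFibers

section BlockIndex

variable {l n m : ℕ}

/-- The index of the block containing a position, when `l` positions are cut into `n` blocks of `m`
consecutive positions each; the last blocks may be incomplete or empty. -/
def blockIndex (hl : l ≤ n * m) (i : Fin l) : Fin n :=
  (Fin.castLE hl i).divNat

theorem blockIndex_monotone (hl : l ≤ n * m) : Monotone (blockIndex hl) :=
  fun _ _ hij ↦ Nat.div_le_div_right hij

theorem card_blockIndex_fiber_le (hl : l ≤ n * m) (j : Fin n) :
    #{i | blockIndex hl i = j} ≤ m := by
  have modNat_injOn : Set.InjOn (fun i ↦ (Fin.castLE hl i).modNat)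
      ({i | blockIndex hl i = j} : Finset (Fin l)) := by
    intro i hi i' hi' hmod
    have hdiv : blockIndex hl i = blockIndex hl i' :=
      ((mem_filter_univ i).1 hi).trans ((mem_filter_univ i').1 hi').symm
    exact Fin.castLE_injective hl (finProdFinEquiv.symm.injective (Prod.ext hdiv hmod))
  simpa using card_le_card_of_injOn (t := univ) _ (fun _ _ ↦ mem_univ _) modNat_injOn

end BlockIndex

section Containment

variable {k l n a b a' b' : ℕ} {q : Equiv.Perm (Fin k)}

theorem graphContains_permGraph_iff {G : Finset (Fin a × Fin b)} :
    GraphContains G (permGraph q) ↔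
      ∃ (f : Fin k → Fin a) (g : Fin k → Fin b),
        StrictMono f ∧ StrictMono g ∧ ∀ i, (f i, g (q i)) ∈ G := by
  simp [GraphContains, permGraph]

theorem GraphContains.of_image_prodMap {G : Finset (Fin a × Fin b)} {f : Fin a → Fin a'}
    {g : Fin b → Fin b'} (hf : Monotone f) (hg : Monotone g)
    (h : GraphContains (G.image (Prod.map f g)) (permGraph q)) :
    GraphContains G (permGraph q) := by
  obtain ⟨r, c, hr, hc, hrc⟩ := graphContains_permGraph_iff.1 h
  have edge_lifts (i) : ∃ x y, (x, y) ∈ G ∧ f x = r i ∧ g y = c (q i) := by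
    simpa using hrc i
  choose x y hxy hx hy using edge_lifts
  refine graphContains_permGraph_iff.2 ⟨x, y ∘ q.symm, fun i i' hi ↦ ?_, fun j j' hj ↦ ?_, ?_⟩
  · exact hf.reflect_lt (by simpa only [hx] using hr hi)
  · exact hg.reflect_lt (by simpa [hy] using hc hj)
  · simpa using hxy

theorem wordGraph_injective : Function.Injective (wordGraph : (Fin l → Fin n) → _) := by
  intro w w' h
  ext1 i
  have hi : (i, w i) ∈ wordGraph w' := h ▸ mem_image_of_mem _ (mem_univ i)
  simpa [wordGraph, eq_comm] using hi

theorem WordContains.of_graphContains {w : Fin l → Fin n}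
    (h : GraphContains (wordGraph w) (permGraph q)) : WordContains w q := by
  obtain ⟨f, g, hf, hg, hfg⟩ := graphContains_permGraph_iff.1 h
  have letter (i) : w (f i) = g (q i) := by simpa [wordGraph] using hfg i
  exact ⟨f, hf, fun i j ↦ by rw [letter, letter, hg.lt_iff_lt]⟩

theorem matContains_adjMatrix_permMatrix_iff {G : Finset (Fin a × Fin b)} :
    MatContains (adjMatrix G) (permMatrix q) ↔ GraphContains G (permGraph q) := by
  simp [MatContains, GraphContains, adjMatrix, permMatrix, permGraph]

theorem oneEntries_adjMatrix (G : Finset (Fin a × Fin b)) : oneEntries (adjMatrix G) = #G := by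
  simp [oneEntries, adjMatrix]

end Containment

section AvoidingGraphs

variable {k : ℕ} {q : Equiv.Perm (Fin k)} {d : ℕ}

variable (q d) in
/-- The Füredi–Hajnal bound for `q` with constant `d`, in the language of bipartite graphs. -/
def FurediHajnalBound : Prop :=
  ∀ (n : ℕ) (G : Finset (Fin n × Fin n)), ¬ GraphContains G (permGraph q) → #G ≤ d * n

theorem furediHajnalBound_of_forall_oneEntries_le
    (hd : ∀ n : ℕ, 0 < n → ∀ P : Fin n → Fin n → Bool,
      ¬ MatContains P (permMatrix q) → oneEntries P ≤ d * n) :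
    FurediHajnalBound q d := by
  intro n G hG
  obtain rfl | hn := n.eq_zero_or_pos
  · simp [eq_empty_of_isEmpty G]
  · rw [← oneEntries_adjMatrix]
    exact hd n hn _ (matContains_adjMatrix_permMatrix_iff.not.2 hG)

open Classical in
variable (q) in
/-- The bipartite graphs on `([a], [b])` that avoid the permutation `q`. -/
noncomputable def avoidingGraphs (a b : ℕ) : Finset (Finset (Fin a × Fin b)) :=
  {G | ¬ GraphContains G (permGraph q)}

theorem mem_avoidingGraphs {a b : ℕ} {G : Finset (Fin a × Fin b)} :
    G ∈ avoidingGraphs q a b ↔ ¬ GraphContains G (permGraph q) := by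
  simp [avoidingGraphs]

theorem image_prodMap_mem_avoidingGraphs {a b a' b' : ℕ} {f : Fin a → Fin a'} {g : Fin b → Fin b'}
    (hf : Monotone f) (hg : Monotone g) {G : Finset (Fin a × Fin b)}
    (hG : G ∈ avoidingGraphs q a b) : G.image (Prod.map f g) ∈ avoidingGraphs q a' b' :=
  mem_avoidingGraphs.2 fun h ↦ mem_avoidingGraphs.1 hG (h.of_image_prodMap hf hg)

theorem card_avoidingGraphs_le_pow_mul_card (hq : FurediHajnalBound q d) {a b n r s : ℕ}
    (hr : 0 < r) (hs : 0 < s) (ha : a ≤ n * r) (hb : b ≤ n * s) :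
    #(avoidingGraphs q a b) ≤ (2 ^ (r * s) - 1) ^ (d * n) * #(avoidingGraphs q n n) := by
  let π : Fin a × Fin b → Fin n × Fin n := Prod.map (blockIndex ha) (blockIndex hb)
  have contraction_mem {G} (hG : G ∈ avoidingGraphs q a b) : G.image π ∈ avoidingGraphs q n n :=
    image_prodMap_mem_avoidingGraphs (blockIndex_monotone ha) (blockIndex_monotone hb) hG
  have fiber_card (y) : #{x | π x = y} ≤ r * s := by
    have fiber_eq : ({x | π x = y} : Finset _) =
        ({i | blockIndex ha i = y.1} : Finset _) ×ˢ ({j | blockIndex hb j = y.2} : Finset _) := by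
      ext; simp [π, Prod.ext_iff]
    rw [fiber_eq, card_product]
    exact Nat.mul_le_mul (card_blockIndex_fiber_le ha _) (card_blockIndex_fiber_le hb _)
  calc #(avoidingGraphs q a b)
      ≤ (2 ^ (r * s) - 1) ^ (d * n) * #((avoidingGraphs q a b).image (image π)) :=
        card_le_pow_mul_card_image_image (Nat.mul_pos hr hs) fiber_card _ fun G hG ↦
          hq n _ (mem_avoidingGraphs.1 (contraction_mem hG))
    _ ≤ (2 ^ (r * s) - 1) ^ (d * n) * #(avoidingGraphs q n n) := by
        gcongr
        exact image_subset_iff.2 fun G hG ↦ contraction_mem hG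

theorem card_avoidingGraphs_le_of_le_one (hq : FurediHajnalBound q d) {n : ℕ} (hn : n ≤ 1) :
    #(avoidingGraphs q n n) ≤ 2 ^ (d * n) := by
  have : Subsingleton (Fin n) := Fin.subsingleton_iff_le_one.2 hn
  have card_injective : Function.Injective (card : Finset (Fin n × Fin n) → ℕ) := by
    intro G H hGH
    rcases G.eq_empty_or_nonempty with rfl | hG
    · exact (card_eq_zero.1 hGH.symm).symm
    · have hH : H.Nonempty := card_pos.1 (hGH ▸ hG.card_pos)
      rw [hG.eq_univ, hH.eq_univ]
  calc #(avoidingGraphs q n n)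
      ≤ #(range (d * n + 1)) :=
        card_le_card_of_injOn card
          (fun G hG ↦ mem_range_succ_iff.2 (hq n G (mem_avoidingGraphs.1 hG)))
          card_injective.injOn
    _ ≤ 2 ^ (d * n) := by
        rw [card_range]
        exact Nat.lt_two_pow_self

theorem card_avoidingGraphs_le (hq : FurediHajnalBound q d) (n : ℕ) :
    #(avoidingGraphs q n n) ≤ 15 ^ (2 * (d * n)) := by
  induction n using Nat.strong_induction_on with
  | _ n ih =>
    obtain hn | hn := le_or_gt n 1
    · calc #(avoidingGraphs q n n) ≤ 2 ^ (d * n) := card_avoidingGraphs_le_of_le_one hq hn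
        _ ≤ 15 ^ (d * n) := Nat.pow_le_pow_left (by norm_num) _
        _ ≤ 15 ^ (2 * (d * n)) :=
            Nat.pow_le_pow_right (by norm_num) (Nat.le_mul_of_pos_left _ two_pos)
    · obtain ⟨h, hlt, hle, hbound⟩ : ∃ h, h < n ∧ n ≤ h * 2 ∧ 3 * h ≤ 2 * n :=
        ⟨(n + 1) / 2, by omega, by omega, by omega⟩
      calc #(avoidingGraphs q n n)
          ≤ 15 ^ (d * h) * #(avoidingGraphs q h h) :=
            card_avoidingGraphs_le_pow_mul_card hq two_pos two_pos hle hle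
        _ ≤ 15 ^ (d * h) * 15 ^ (2 * (d * h)) := Nat.mul_le_mul_left _ (ih h hlt)
        _ = 15 ^ (d * (3 * h)) := by ring
        _ ≤ 15 ^ (d * (2 * n)) :=
            Nat.pow_le_pow_right (by norm_num) (Nat.mul_le_mul_left d hbound)
        _ = 15 ^ (2 * (d * n)) := by rw [Nat.mul_left_comm]

theorem card_avoidingWords_le_card_avoidingGraphs (l n : ℕ) :
    Nat.card {w : Fin l → Fin n // ¬ WordContains w q} ≤ #(avoidingGraphs q l n) := by
  classical
  rw [Nat.card_eq_fintype_card, Fintype.card_subtype]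
  refine card_le_card_of_injOn wordGraph (fun w hw ↦ ?_) wordGraph_injective.injOn
  have hw : ¬ WordContains w q := (mem_filter_univ w).1 hw
  exact mem_avoidingGraphs.2 fun h ↦ hw (.of_graphContains h)

end AvoidingGraphs

theorem two_pow_sub_one_mul_pow_le {m : ℕ} (hm : 0 < m) (c d n : ℕ) :
    ((2 ^ m - 1) * c) ^ (d * n) ≤ ((2 * c) ^ d) ^ (n * m) := by
  calc ((2 ^ m - 1) * c) ^ (d * n)
      ≤ (2 ^ m * c ^ m) ^ (d * n) := by
        gcongr
        exacts [Nat.sub_le _ _, Nat.le_self_pow hm.ne' c]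
    _ = ((2 * c) ^ d) ^ (n * m) := by ring

theorem multiset_count_bound_general {k : ℕ} (q : Equiv.Perm (Fin k)) (d : ℕ)
    (hd : ∀ n : ℕ, 0 < n → ∀ P : Fin n → Fin n → Bool,
      ¬ MatContains P (permMatrix q) → oneEntries P ≤ d * n)
    (l n m : ℕ) (hm : 0 < m) (hl : l ≤ n * m) :
    Nat.card {w : Fin l → Fin n // ¬ WordContains w q} ≤ ((2 ^ m - 1) * 15 ^ 2) ^ (d * n) := by
  have hq : FurediHajnalBound q d := furediHajnalBound_of_forall_oneEntries_le hd
  calc Nat.card {w : Fin l → Fin n // ¬ WordContains w q}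
      ≤ #(avoidingGraphs q l n) := card_avoidingWords_le_card_avoidingGraphs l n
    _ ≤ (2 ^ m - 1) ^ (d * n) * #(avoidingGraphs q n n) := by
        simpa using card_avoidingGraphs_le_pow_mul_card hq hm one_pos hl (mul_one n).ge
    _ ≤ (2 ^ m - 1) ^ (d * n) * 15 ^ (2 * (d * n)) :=
        Nat.mul_le_mul_left _ (card_avoidingGraphs_le hq n)
    _ = ((2 ^ m - 1) * 15 ^ 2) ^ (d * n) := by rw [mul_pow, ← pow_mul]

/-- `S_{n,m}(q) ≤ ((2 · 15^2)^d)^(n·m)` under Füredi–Hajnal. -/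
theorem multiset_count_bound {k : ℕ} (q : Equiv.Perm (Fin k)) (d : ℕ)
    (hd : ∀ n : ℕ, 0 < n → ∀ P : Fin n → Fin n → Bool,
      ¬ MatContains P (permMatrix q) → oneEntries P ≤ d * n)
    (n m : ℕ) (hn : 0 < n) (hm : 0 < m) :
    Nat.card {w : Fin (n * m) → Fin n // IsRegularWord m w ∧ ¬ WordContains w q} ≤
      ((2 * 15 ^ 2) ^ d) ^ (n * m) := by
  refine le_trans ?_ ((multiset_count_bound_general q d hd _ n m hm le_rfl).trans
    (two_pow_sub_one_mul_pow_le hm _ d n))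
  exact Nat.card_mono (Set.toFinite _) fun w hw ↦ hw.2
end
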